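/- Let ν be a lattice path. The right-flushing map R is well defined (for every ν-path μ there are always enough available x-coordinates to place all points, and R(μ) is a ν-tree), the left-flushing map L is well defined (for every ν-tree T, L(T) is the set of lattice points of a ν-path), and R and L are mutually inverse bijections between the set of ν-paths and the set of ν-trees. -/

import Mathlib

open scoped Classical

/-! Lattice paths: `true` = north step, `false` = east step. -/

def eastSteps (ν : List Bool) : ℕ := ν.count false
def northSteps (ν : List Bool) : ℕ := ν.count true

/-- Height at which the path first reaches abscissa `x`. -/
def heightAt : List Bool → ℕ → ℕ
  | _, 0 => 0
  | [], _ + 1 => 0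
  | true :: rest, x + 1 => heightAt rest (x + 1) + 1
  | false :: rest, x + 1 => heightAt rest x

/-- Lattice point of a path after `i` steps. -/
def pointAt (μ : List Bool) (i : ℕ) : ℕ × ℕ :=
  ((μ.take i).count false, (μ.take i).count true)

/-- The set `A_ν` of lattice points weakly above `ν`. -/
def APts (ν : List Bool) : Set (ℕ × ℕ) :=
  {p | p.1 ≤ eastSteps ν ∧ heightAt ν p.1 ≤ p.2 ∧ p.2 ≤ northSteps ν}

def Incompatible (ν : List Bool) (p q : ℕ × ℕ) : Prop :=
  (p.1 < q.1 ∧ p.2 < q.2 ∧ (q.1, p.2) ∈ APts ν) ∨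
    (q.1 < p.1 ∧ q.2 < p.2 ∧ (p.1, q.2) ∈ APts ν)

def Compatible (ν : List Bool) (p q : ℕ × ℕ) : Prop := ¬ Incompatible ν p q

def IsNuTree (ν : List Bool) (T : Set (ℕ × ℕ)) : Prop :=
  T ⊆ APts ν ∧ T.Pairwise (Compatible ν) ∧
    ∀ T', T' ⊆ APts ν → T'.Pairwise (Compatible ν) → T ⊆ T' → T' = T

def IsRightRotationAt (T T' : Set (ℕ × ℕ)) (q q' : ℕ × ℕ) : Prop :=
  ∃ x y x'' y', q = (x, y) ∧ q' = (x'', y') ∧ x < x'' ∧ y < y' ∧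
    (x, y) ∈ T ∧ (x, y') ∈ T ∧ (x'', y) ∈ T ∧
    (∀ b, y < b → b < y' → (x, b) ∉ T) ∧
    (∀ a, x < a → a < x'' → (a, y) ∉ T) ∧
    (∀ a, x < a → a < x'' → (a, y') ∉ T) ∧
    (∀ b, y < b → b < y' → (x'', b) ∉ T) ∧
    T' = (T \ {(x, y)}) ∪ {(x'', y')}

def IsRightRotation (T T' : Set (ℕ × ℕ)) : Prop :=
  ∃ q q', IsRightRotationAt T T' q q'

/-- Order relation of the rotation poset of ν-trees. -/
def TreeLE (ν : List Bool) : Set (ℕ × ℕ) → Set (ℕ × ℕ) → Prop :=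
  Relation.ReflTransGen fun A B => IsNuTree ν A ∧ IsNuTree ν B ∧ IsRightRotation A B

def IsNuPath (ν μ : List Bool) : Prop :=
  eastSteps μ = eastSteps ν ∧ northSteps μ = northSteps ν ∧
    ∀ i ≤ μ.length, pointAt μ i ∈ APts ν

noncomputable def horiz (ν : List Bool) (p : ℕ × ℕ) : ℕ :=
  sSup {k | (p.1 + k, p.2) ∈ APts ν}

/-- Covering relation of the ν-Tamari lattice. -/
def TamariCover (ν μ μ' : List Bool) : Prop :=
  IsNuPath ν μ ∧ IsNuPath ν μ' ∧
    ∃ i j, 0 < i ∧ i < j ∧ j ≤ μ.length ∧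
      μ.getD (i - 1) true = false ∧ μ.getD i false = true ∧
      horiz ν (pointAt μ j) = horiz ν (pointAt μ i) ∧
      (∀ k, i < k → k < j → horiz ν (pointAt μ k) ≠ horiz ν (pointAt μ i)) ∧
      μ' = μ.take (i - 1) ++ (μ.drop i).take (j - i) ++ [false] ++ μ.drop j

def TamariLE (ν : List Bool) : List Bool → List Bool → Prop :=
  Relation.ReflTransGen (TamariCover ν)

/-! Flushing maps -/

def rowAvail (ν : List Bool) (y : ℕ) : List ℕ :=
  ((List.range (eastSteps ν + 1)).filter fun x => decide (heightAt ν x ≤ y)).reverse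

def pointsAtHeight (μ : List Bool) (y : ℕ) : ℕ :=
  ((List.range (μ.length + 1)).filter fun i => decide ((μ.take i).count true = y)).length

def rflushAux (ν : List Bool) : List ℕ → ℕ → List ℕ → List (ℕ × ℕ)
  | [], _, _ => []
  | c :: rest, y, forbidden =>
    let placed := ((rowAvail ν y).filter fun x => decide (x ∉ forbidden)).take c
    placed.map (fun x => (x, y)) ++ rflushAux ν rest (y + 1) (forbidden ++ placed.dropLast)

/-- Right-flushing map `R`. -/
def Rflush (ν μ : List Bool) : Set (ℕ × ℕ) :=
  {p | p ∈ rflushAux ν ((List.range (northSteps ν + 1)).map (pointsAtHeight μ)) 0 []}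

def lflushAux (m : ℕ) : List ℕ → ℕ → List ℕ → List (ℕ × ℕ)
  | [], _, _ => []
  | c :: rest, y, forbidden =>
    let placed := ((List.range (m + 1)).filter fun x => decide (x ∉ forbidden)).take c
    placed.map (fun x => (x, y)) ++ lflushAux m rest (y + 1) (forbidden ++ placed.dropLast)

noncomputable def rowCount (T : Set (ℕ × ℕ)) (y : ℕ) : ℕ := {x | (x, y) ∈ T}.ncard

/-- Left-flushing map `L`. -/
noncomputable def Lflush (ν : List Bool) (T : Set (ℕ × ℕ)) : Set (ℕ × ℕ) :=
  {p | p ∈ lflushAux (eastSteps ν) ((List.range (northSteps ν + 1)).map (rowCount T)) 0 []}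

def pathPointSet (μ : List Bool) : Set (ℕ × ℕ) := {p | ∃ i ≤ μ.length, pointAt μ i = p}

/-! Bracket vectors (0-indexed positions `0,…,ℓ`). -/

noncomputable def fpos (ν : List Bool) (k : ℕ) : ℕ :=
  sSup {i | i ≤ ν.length ∧ (ν.take i).count true = k}

def bmin (ν : List Bool) : List ℕ :=
  (List.range (ν.length + 1)).map fun i => (ν.take i).count true

def IsBracketVector (ν : List Bool) (b : List ℕ) : Prop :=
  b.length = ν.length + 1 ∧
    (∀ k ≤ northSteps ν, b.getD (fpos ν k) 0 = k) ∧
    (∀ i < b.length, (bmin ν).getD i 0 ≤ b.getD i 0 ∧ b.getD i 0 ≤ northSteps ν) ∧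
    ∀ i j k, i < j → j < k → k < b.length →
      ¬(b.getD i 0 = b.getD k 0 ∧ b.getD i 0 < b.getD j 0)

noncomputable def leftChild (T : Set (ℕ × ℕ)) (p : ℕ × ℕ) : Option (ℕ × ℕ) :=
  if ∃ b, (p.1, b) ∈ T ∧ b < p.2 then some (p.1, sSup {b | (p.1, b) ∈ T ∧ b < p.2})
  else none

noncomputable def rightChild (T : Set (ℕ × ℕ)) (p : ℕ × ℕ) : Option (ℕ × ℕ) :=
  if ∃ a, (a, p.2) ∈ T ∧ p.1 < a then
    if ∃ b, (sInf {a | (a, p.2) ∈ T ∧ p.1 < a}, b) ∈ T ∧ p.2 < b then none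
    else some (sInf {a | (a, p.2) ∈ T ∧ p.1 < a}, p.2)
  else none

noncomputable def inorderAux (T : Set (ℕ × ℕ)) : ℕ → ℕ × ℕ → List (ℕ × ℕ)
  | 0, _ => []
  | fuel + 1, p =>
    (match leftChild T p with
      | none => []
      | some l => inorderAux T fuel l) ++ p ::
      (match rightChild T p with
        | none => []
        | some r => inorderAux T fuel r)

/-- Bracket vector of a ν-tree: y-coordinates read in in-order from the root `(0,n)`. -/
noncomputable def bracketOfTree (ν : List Bool) (T : Set (ℕ × ℕ)) : List ℕ :=
  (inorderAux T T.ncard (0, northSteps ν)).map Prod.snd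

noncomputable def bracketAssign (ν μ : List Bool) : List (ℕ × ℕ) :=
  ((List.range (northSteps ν + 1)).foldl
    (fun (st : List (ℕ × ℕ) × List ℕ) k =>
      let picked := ((st.2.filter fun i => decide (i ≤ fpos ν k)).reverse).take
        (pointsAtHeight μ k)
      (st.1 ++ picked.map fun i => (i, k), st.2.filter fun i => decide (i ∉ picked)))
    ([], List.range (ν.length + 1))).1

/-- Bracket vector of a ν-path. -/
noncomputable def bracketOfPath (ν μ : List Bool) : List ℕ :=
  (List.range (ν.length + 1)).map fun i => ((bracketAssign ν μ).lookup i).getD 0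

/-- Componentwise order on (equal length) integer vectors. -/
def listLE (b b' : List ℕ) : Prop :=
  b.length = b'.length ∧ ∀ i, b.getD i 0 ≤ b'.getD i 0

/-! Reversal -/

def revPath (ν : List Bool) : List Bool := ν.reverse.map fun s => !s

def revTree (ν : List Bool) (T : Set (ℕ × ℕ)) : Set (ℕ × ℕ) :=
  (fun p : ℕ × ℕ => (northSteps ν - p.2, eastSteps ν - p.1)) '' T

/-! Pipe dreams and subword complexes -/

def dOf (ν : List Bool) (p : ℕ × ℕ) : ℕ := p.1 + (northSteps ν - p.2)

def labelPerm (ν : List Bool) (p : ℕ × ℕ) : Equiv.Perm ℕ :=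
  Equiv.swap (dOf ν p + 1) (dOf ν p + 2)

/-- The points of `A_ν` in reading order: rows from bottom to top, each left to right. -/
def readingList (ν : List Bool) : List (ℕ × ℕ) :=
  ((List.range (northSteps ν + 1)).map fun y =>
    ((List.range (eastSteps ν + 1)).filter fun x => decide (heightAt ν x ≤ y)).map
      fun x => (x, y)).flatten

/-- The minimal ν-tree. -/
def TminSet (ν : List Bool) : Set (ℕ × ℕ) :=
  {p | p ∈ APts ν ∧ (p.1 = 0 ∨ ∃ i < ν.length, ν.getD i true = false ∧ p = pointAt ν (i + 1))}

noncomputable def prodOver (ν : List Bool) (C : Set (ℕ × ℕ)) : Equiv.Perm ℕ :=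
  (((readingList ν).filter fun p => decide (p ∈ C)).map (labelPerm ν)).prod

/-- Coxeter length: number of inversions. -/
noncomputable def lenInv (π : Equiv.Perm ℕ) : ℕ :=
  {q : ℕ × ℕ | q.1 < q.2 ∧ π q.2 < π q.1}.ncard

noncomputable def piNu (ν : List Bool) : Equiv.Perm ℕ := prodOver ν (APts ν \ TminSet ν)

def Qword (ν : List Bool) : List (Equiv.Perm ℕ) := (readingList ν).map (labelPerm ν)

noncomputable def prodAt (Q : List (Equiv.Perm ℕ)) (P : Finset ℕ) : Equiv.Perm ℕ :=
  (((List.range Q.length).filter fun i => decide (i ∈ P)).map fun i => Q.getD i 1).prod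

def IsFacet (Q : List (Equiv.Perm ℕ)) (π : Equiv.Perm ℕ) (I : Finset ℕ) : Prop :=
  I ⊆ Finset.range Q.length ∧
    prodAt Q (Finset.range Q.length \ I) = π ∧
    (Finset.range Q.length \ I).card = lenInv π

def IncFlip (Q : List (Equiv.Perm ℕ)) (π : Equiv.Perm ℕ) (I J : Finset ℕ) : Prop :=
  IsFacet Q π I ∧ IsFacet Q π J ∧ ∃ i ∈ I, ∃ j ∈ J, i < j ∧ I.erase i = J.erase j

def FlipLE (Q : List (Equiv.Perm ℕ)) (π : Equiv.Perm ℕ) : Finset ℕ → Finset ℕ → Prop :=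
  Relation.ReflTransGen (IncFlip Q π)

/-- The maximal ν-tree. -/
def TmaxSet (ν : List Bool) : Set (ℕ × ℕ) :=
  {p | (p.1 ≤ eastSteps ν ∧ p.2 = northSteps ν) ∨ ∃ i < ν.length, ν.getD i false = true ∧ p = pointAt ν i}


/-! ### Generic flushing -/

def forb (A : ℕ → List ℕ) (c : ℕ → ℕ) : ℕ → List ℕ
  | 0 => []
  | y + 1 => forb A c y ++
      (((A y).filter fun x => decide (x ∉ forb A c y)).take (c y)).dropLast

def plc (A : ℕ → List ℕ) (c : ℕ → ℕ) (y : ℕ) : List ℕ :=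
  ((A y).filter fun x => decide (x ∉ forb A c y)).take (c y)

lemma forb_succ (A : ℕ → List ℕ) (c : ℕ → ℕ) (y : ℕ) :
    forb A c (y + 1) = forb A c y ++ (plc A c y).dropLast := rfl

lemma mem_rflushAux (ν : List Bool) (c : ℕ → ℕ) (k y : ℕ) (p : ℕ × ℕ) :
    p ∈ rflushAux ν ((List.range k).map fun i => c (y + i)) y (forb (rowAvail ν) c y) ↔
      y ≤ p.2 ∧ p.2 < y + k ∧ p.1 ∈ plc (rowAvail ν) c p.2 := by
  induction k generalizing y with
  | zero => simp [rflushAux]; omega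
  | succ k ih =>
    have h2 := ih (y + 1)
    rw [forb_succ] at h2
    rw [List.range_succ_eq_map, List.map_cons, List.map_map]
    have e : ((fun i => c (y + i)) ∘ Nat.succ) = fun i => c (y + 1 + i) := by
      funext i; simp only [Function.comp, Nat.succ_eq_add_one]; congr 1; omega
    rw [e]
    simp only [rflushAux, List.mem_append, Nat.add_zero]
    change _ ∨ p ∈ rflushAux ν _ (y + 1) (forb (rowAvail ν) c y ++ (plc (rowAvail ν) c y).dropLast) ↔ _
    rw [h2]
    change p ∈ List.map _ (plc (rowAvail ν) c y) ∨ _ ↔ _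
    obtain ⟨a, b⟩ := p
    simp only [List.mem_map, Prod.mk.injEq]
    constructor
    · rintro (⟨x, hx, rfl, rfl⟩ | ⟨h1, h2, h3⟩)
      · exact ⟨le_rfl, by omega, hx⟩
      · exact ⟨by omega, by omega, h3⟩
    · rintro ⟨h1, h2, h3⟩
      by_cases h : y = b
      · subst h; exact Or.inl ⟨a, h3, rfl, rfl⟩
      · exact Or.inr ⟨by omega, by omega, h3⟩

lemma mem_lflushAux (m : ℕ) (c : ℕ → ℕ) (k y : ℕ) (p : ℕ × ℕ) :
    p ∈ lflushAux m ((List.range k).map fun i => c (y + i)) y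
        (forb (fun _ => List.range (m + 1)) c y) ↔
      y ≤ p.2 ∧ p.2 < y + k ∧ p.1 ∈ plc (fun _ => List.range (m + 1)) c p.2 := by
  induction k generalizing y with
  | zero => simp [lflushAux]; omega
  | succ k ih =>
    have h2 := ih (y + 1)
    rw [forb_succ] at h2
    rw [List.range_succ_eq_map, List.map_cons, List.map_map]
    have e : ((fun i => c (y + i)) ∘ Nat.succ) = fun i => c (y + 1 + i) := by
      funext i; simp only [Function.comp, Nat.succ_eq_add_one]; congr 1; omega
    rw [e]
    simp only [lflushAux, List.mem_append, Nat.add_zero]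
    change _ ∨ p ∈ lflushAux m _ (y + 1) (forb (fun _ => List.range (m + 1)) c y ++ (plc (fun _ => List.range (m + 1)) c y).dropLast) ↔ _
    rw [h2]
    change p ∈ List.map _ (plc (fun _ => List.range (m + 1)) c y) ∨ _ ↔ _
    obtain ⟨a, b⟩ := p
    simp only [List.mem_map, Prod.mk.injEq]
    constructor
    · rintro (⟨x, hx, rfl, rfl⟩ | ⟨h1, h2, h3⟩)
      · exact ⟨le_rfl, by omega, hx⟩
      · exact ⟨by omega, by omega, h3⟩
    · rintro ⟨h1, h2, h3⟩
      by_cases h : y = b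
      · subst h; exact Or.inl ⟨a, h3, rfl, rfl⟩
      · exact Or.inr ⟨by omega, by omega, h3⟩

lemma mem_Rflush (ν μ : List Bool) (x y : ℕ) :
    (x, y) ∈ Rflush ν μ ↔ y ≤ northSteps ν ∧ x ∈ plc (rowAvail ν) (pointsAtHeight μ) y := by
  have := mem_rflushAux ν (pointsAtHeight μ) (northSteps ν + 1) 0 (x, y)
  simp only [Nat.zero_add] at this
  unfold Rflush
  rw [Set.mem_setOf_eq]
  refine this.trans ?_
  simp [Nat.lt_succ_iff]

lemma mem_Lflush (ν : List Bool) (T : Set (ℕ × ℕ)) (x y : ℕ) :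
    (x, y) ∈ Lflush ν T ↔ y ≤ northSteps ν ∧
      x ∈ plc (fun _ => List.range (eastSteps ν + 1)) (rowCount T) y := by
  have := mem_lflushAux (eastSteps ν) (rowCount T) (northSteps ν + 1) 0 (x, y)
  simp only [Nat.zero_add] at this
  unfold Lflush
  rw [Set.mem_setOf_eq]
  refine this.trans ?_
  simp [Nat.lt_succ_iff]

/-! ### Sorted lists -/

lemma take_up {L : List ℕ} (hL : L.Pairwise (· > ·)) (c : ℕ) {x x' : ℕ}
    (hx : x ∈ L.take c) (hx' : x' ∈ L) (h : x < x') : x' ∈ L.take c := by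
  rw [← List.take_append_drop c L] at hL hx'
  rcases List.mem_append.1 hx' with h1 | h1
  · exact h1
  · have := (List.pairwise_append.1 hL).2.2 x hx x' h1
    omega

lemma mem_dropLast_sorted {L : List ℕ} (hL : L.Pairwise (· > ·)) (x : ℕ) :
    x ∈ L.dropLast ↔ x ∈ L ∧ ∃ l ∈ L, l < x := by
  rcases List.eq_nil_or_concat L with rfl | ⟨L', b, rfl⟩
  · simp
  · simp only [List.concat_eq_append] at *
    rw [List.dropLast_concat]
    have h := (List.pairwise_append.1 hL).2.2
    constructor
    · intro hx
      exact ⟨by simp [hx], b, by simp, h x hx b (by simp)⟩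
    · rintro ⟨h1, l, h2, h3⟩
      rcases List.mem_append.1 h1 with h4 | h4
      · exact h4
      · simp only [List.mem_singleton] at h4
        subst h4
        rcases List.mem_append.1 h2 with h5 | h5
        · have := h l h5 x (by simp); omega
        · simp only [List.mem_singleton] at h5; omega

lemma take_eq_of_up {L : List ℕ} (hL : L.Pairwise (· > ·)) (S : Finset ℕ)
    (hS : ∀ x ∈ S, x ∈ L) (hup : ∀ x ∈ S, ∀ x' ∈ L, x < x' → x' ∈ S) (x : ℕ) :
    (x ∈ L.take S.card ↔ x ∈ S) ∧ (L.take S.card).length = S.card := by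
  have hnd : L.Nodup := hL.imp (fun h => by omega)
  have hle : S.card ≤ L.length := by
    rw [← List.toFinset_card_of_nodup hnd]
    exact Finset.card_le_card fun x hx => List.mem_toFinset.2 (hS x hx)
  have hlen : (L.take S.card).length = S.card := by simp [hle]
  have hndt : (L.take S.card).Nodup := hnd.sublist (List.take_sublist _ _)
  have hc : (L.take S.card).toFinset.card = S.card := by
    rw [List.toFinset_card_of_nodup hndt, hlen]
  have key : (L.take S.card).toFinset = S := by
    by_cases h : S ⊆ (L.take S.card).toFinset
    · exact (Finset.eq_of_subset_of_card_le h hc.le).symm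
    · obtain ⟨a, ha, ha'⟩ := Finset.not_subset.1 h
      rw [List.mem_toFinset] at ha'
      refine Finset.eq_of_subset_of_card_le (fun p hp => ?_) hc.ge
      rw [List.mem_toFinset] at hp
      rcases lt_trichotomy p a with h1 | h1 | h1
      · exact absurd (take_up hL _ hp (hS a ha) h1) ha'
      · exact h1 ▸ ha
      · exact hup a ha p (List.mem_of_mem_take hp) h1
  exact ⟨by rw [← List.mem_toFinset, key], hlen⟩

/-! ### Heights -/

lemma heightAt_zero (ν : List Bool) : heightAt ν 0 = 0 := by cases ν <;> rfl

lemma heightAt_mono (ν : List Bool) : ∀ x x', x ≤ x' → x' ≤ eastSteps ν →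
    heightAt ν x ≤ heightAt ν x' := by
  induction ν with
  | nil => intro x x' h h'; simp [eastSteps] at h'; subst h'; simp at h; subst h; exact le_rfl
  | cons b ν ih =>
    intro x x' h h'
    rcases x with _ | x
    · rw [heightAt_zero]; exact Nat.zero_le _
    rcases x' with _ | x'
    · omega
    cases b
    · simp only [heightAt]; apply ih _ _ (by omega); simp [eastSteps] at h' ⊢; omega
    · simp only [heightAt]
      have := ih (x+1) (x'+1) h (by simp [eastSteps] at h' ⊢; omega)
      omega

lemma heightAt_le (ν : List Bool) : ∀ x, heightAt ν x ≤ northSteps ν := by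
  induction ν with
  | nil => intro x; cases x <;> simp [heightAt]
  | cons b ν ih =>
    intro x
    rcases x with _ | x
    · rw [heightAt_zero]; exact Nat.zero_le _
    cases b
    · have := ih x; simp [heightAt, northSteps] at *; omega
    · have := ih (x+1); simp [heightAt, northSteps] at *; omega

lemma mem_rowAvail (ν : List Bool) (x y : ℕ) :
    x ∈ rowAvail ν y ↔ x ≤ eastSteps ν ∧ heightAt ν x ≤ y := by
  simp [rowAvail, Nat.lt_succ_iff]

lemma mem_APts (ν : List Bool) (x y : ℕ) :
    (x, y) ∈ APts ν ↔ y ≤ northSteps ν ∧ x ∈ rowAvail ν y := by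
  rw [mem_rowAvail]; simp only [APts, Set.mem_setOf_eq]; tauto

lemma rowAvail_sorted (ν : List Bool) (y : ℕ) : (rowAvail ν y).Pairwise (· > ·) := by
  unfold rowAvail
  rw [List.pairwise_reverse]
  exact List.Pairwise.filter _ List.pairwise_lt_range

lemma rowAvail_lower (ν : List Bool) {x x' y : ℕ} (h : x' ≤ x) (hx : x ∈ rowAvail ν y) :
    x' ∈ rowAvail ν y := by
  rw [mem_rowAvail] at *
  exact ⟨by omega, (heightAt_mono ν _ _ h hx.1).trans hx.2⟩

lemma rowAvail_up (ν : List Bool) {x y y' : ℕ} (h : y ≤ y') (hx : x ∈ rowAvail ν y) :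
    x ∈ rowAvail ν y' := by
  rw [mem_rowAvail] at *
  exact ⟨by omega, by omega⟩

lemma zero_mem_rowAvail (ν : List Bool) (y : ℕ) : 0 ∈ rowAvail ν y := by
  rw [mem_rowAvail, heightAt_zero]; omega

lemma rowAvail_top (ν : List Bool) (x : ℕ) : x ∈ rowAvail ν (northSteps ν) ↔ x ≤ eastSteps ν := by
  rw [mem_rowAvail]; exact ⟨fun h => h.1, fun h => ⟨h, heightAt_le ν x⟩⟩

/-! ### Right flushing, combinatorics -/

section R
variable (ν : List Bool) (c : ℕ → ℕ)

lemma filt_sorted (y : ℕ) :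
    ((rowAvail ν y).filter fun x => decide (x ∉ forb (rowAvail ν) c y)).Pairwise (· > ·) :=
  List.Pairwise.filter _ (rowAvail_sorted ν y)

lemma plc_sorted (y : ℕ) : (plc (rowAvail ν) c y).Pairwise (· > ·) :=
  (filt_sorted ν c y).sublist (List.take_sublist _ _)

lemma plc_mem {x y : ℕ} (h : x ∈ plc (rowAvail ν) c y) :
    x ∈ rowAvail ν y ∧ x ∉ forb (rowAvail ν) c y := by
  have := List.mem_of_mem_take h
  simpa using this

lemma plc_up {x x' y : ℕ} (h : x ∈ plc (rowAvail ν) c y) (hx : x < x')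
    (h1 : x' ∈ rowAvail ν y) (h2 : x' ∉ forb (rowAvail ν) c y) :
    x' ∈ plc (rowAvail ν) c y :=
  take_up (filt_sorted ν c y) _ h (by simp [h1, h2]) hx

lemma mem_forb_succ (x y : ℕ) : x ∈ forb (rowAvail ν) c (y + 1) ↔
    x ∈ forb (rowAvail ν) c y ∨ (x ∈ plc (rowAvail ν) c y ∧ ∃ l ∈ plc (rowAvail ν) c y, l < x) := by
  rw [forb_succ, List.mem_append, mem_dropLast_sorted (plc_sorted ν c y)]

lemma forb_mono {x y y' : ℕ} (h : y ≤ y') (hx : x ∈ forb (rowAvail ν) c y) :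
    x ∈ forb (rowAvail ν) c y' := by
  induction h with
  | refl => exact hx
  | step _ ih => rw [Nat.succ_eq_add_one, mem_forb_succ]; exact Or.inl ih

lemma mem_forb (x y : ℕ) : x ∈ forb (rowAvail ν) c y ↔
    ∃ j < y, ∃ l ∈ plc (rowAvail ν) c j, l < x ∧ x ∈ rowAvail ν j := by
  constructor
  · induction y with
    | zero => simp [forb]
    | succ y ih =>
      rw [mem_forb_succ]
      rintro (h | ⟨h, l, hl, hlx⟩)
      · obtain ⟨j, hj, r⟩ := ih h
        exact ⟨j, by omega, r⟩
      · exact ⟨y, by omega, l, hl, hlx, (plc_mem ν c h).1⟩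
  · rintro ⟨j, hj, l, hl, hlx, hx⟩
    apply forb_mono ν c (show j + 1 ≤ y from hj)
    rw [mem_forb_succ]
    by_cases h : x ∈ forb (rowAvail ν) c j
    · exact Or.inl h
    · exact Or.inr ⟨plc_up ν c hl hlx hx h, l, hl, hlx⟩

lemma plc_nodup (y : ℕ) : (plc (rowAvail ν) c y).Nodup := (plc_sorted ν c y).imp (fun h => by omega)

lemma forb_nodup (y : ℕ) : (forb (rowAvail ν) c y).Nodup := by
  induction y with
  | zero => simp [forb]
  | succ y ih =>
    rw [forb_succ, List.nodup_append]
    refine ⟨ih, (plc_nodup ν c y).sublist (List.dropLast_sublist _), ?_⟩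
    rintro a ha b hb rfl
    exact (plc_mem ν c (List.mem_of_mem_dropLast hb)).2 ha

/-- Abscissa at which the path with row counts `c` enters row `y`. -/
def EE (c : ℕ → ℕ) (y : ℕ) : ℕ := ∑ j ∈ Finset.range y, (c j - 1)

lemma EE_succ (c : ℕ → ℕ) (y : ℕ) : EE c (y + 1) = EE c y + (c y - 1) :=
  Finset.sum_range_succ _ _

lemma EE_congr {c c' : ℕ → ℕ} {y : ℕ} (h : ∀ j < y, c j = c' j) : EE c y = EE c' y :=
  Finset.sum_congr rfl fun j hj => by rw [h j (Finset.mem_range.1 hj)]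

lemma EE_mono (c : ℕ → ℕ) {y y' : ℕ} (h : y ≤ y') : EE c y ≤ EE c y' :=
  Finset.sum_le_sum_of_subset (Finset.range_mono h)

lemma forb_length (y : ℕ) (h : ∀ j < y, (plc (rowAvail ν) c j).length = c j) :
    (forb (rowAvail ν) c y).length = EE c y := by
  induction y with
  | zero => simp [forb, EE]
  | succ y ih =>
    rw [forb_succ, List.length_append, ih (fun j hj => h j (by omega)), List.length_dropLast,
      h y (by omega), EE_succ]

lemma forb_avail {x y : ℕ} (h : x ∈ forb (rowAvail ν) c (y + 1)) : x ∈ rowAvail ν y ∧ 0 < x := by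
  obtain ⟨j, hj, l, -, hl, hx⟩ := (mem_forb ν c _ _).1 h
  exact ⟨rowAvail_up ν (by omega) hx, by omega⟩

/-- Row counts of a `ν`-path. -/
def Valid : Prop :=
  (∀ y ≤ northSteps ν, 1 ≤ c y ∧ EE c (y + 1) ∈ rowAvail ν y) ∧
    EE c (northSteps ν + 1) = eastSteps ν

variable {ν c}

lemma rowAvail_nodup (ν : List Bool) (y : ℕ) : (rowAvail ν y).Nodup :=
  (rowAvail_sorted ν y).imp (fun h => by omega)

lemma lt_length_rowAvail {e y : ℕ} (h : e ∈ rowAvail ν y) : e < (rowAvail ν y).length := by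
  rw [← List.toFinset_card_of_nodup (rowAvail_nodup ν y)]
  have : Finset.range (e + 1) ⊆ (rowAvail ν y).toFinset := fun x hx => by
    rw [List.mem_toFinset]
    exact rowAvail_lower ν (by simp at hx; omega) h
  simpa using Finset.card_le_card this

lemma mem_rowAvail_of_lt {e y : ℕ} (h : e < (rowAvail ν y).length) : e ∈ rowAvail ν y := by
  by_contra hn
  rw [← List.toFinset_card_of_nodup (rowAvail_nodup ν y)] at h
  have : (rowAvail ν y).toFinset ⊆ Finset.range e := fun x hx => by
    rw [List.mem_toFinset] at hx
    rw [Finset.mem_range]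
    by_contra h2
    exact hn (rowAvail_lower ν (by omega) hx)
  have := Finset.card_le_card this
  simp only [Finset.card_range] at this
  omega

lemma valid_length (hv : Valid ν c) : ∀ y ≤ northSteps ν, (plc (rowAvail ν) c y).length = c y := by
  intro y
  induction y using Nat.strong_induction_on with
  | _ y ih =>
    intro hy
    have hl := forb_length ν c y fun j hj => ih j hj (by omega)
    have h1 := lt_length_rowAvail (hv.1 y hy).2
    have h0 := (hv.1 y hy).1
    rw [EE_succ, ← hl] at h1
    have h2 : (rowAvail ν y).length ≤ (forb (rowAvail ν) c y).length +
        ((rowAvail ν y).filter fun x => decide (x ∉ forb (rowAvail ν) c y)).length := by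
      rw [← List.toFinset_card_of_nodup (rowAvail_nodup ν y), ← List.length_append]
      refine le_trans (Finset.card_le_card ?_) (List.toFinset_card_le _)
      intro x hx
      rw [List.mem_toFinset] at *
      by_cases h : x ∈ forb (rowAvail ν) c y <;> simp [h, hx]
    unfold plc
    rw [List.length_take]
    omega

lemma forb_top (hv : Valid ν c) {x : ℕ} (h0 : 0 < x) (hx : x ≤ eastSteps ν) :
    x ∈ forb (rowAvail ν) c (northSteps ν + 1) := by
  have hl := forb_length ν c (northSteps ν + 1) fun j hj => valid_length hv j (by omega)
  rw [hv.2, ← List.toFinset_card_of_nodup (forb_nodup ν c _)] at hl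
  have : (forb (rowAvail ν) c (northSteps ν + 1)).toFinset = Finset.Icc 1 (eastSteps ν) := by
    apply Finset.eq_of_subset_of_card_le
    · intro a ha
      rw [List.mem_toFinset] at ha
      have := forb_avail ν c ha
      rw [rowAvail_top] at this
      rw [Finset.mem_Icc]; omega
    · rw [hl]; simp
  rw [← List.mem_toFinset, this, Finset.mem_Icc]; omega

end R

lemma Rflush_tree {ν μ : List Bool} (hv : Valid ν (pointsAtHeight μ)) : IsNuTree ν (Rflush ν μ) := by
  set c := pointsAtHeight μ with hc
  have hcomp : ∀ x1 y1 x2 y2, (x1, y1) ∈ Rflush ν μ → (x2, y2) ∈ Rflush ν μ →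
      ¬ (x1 < x2 ∧ y1 < y2 ∧ (x2, y1) ∈ APts ν) := by
    rintro x1 y1 x2 y2 h1 h2 ⟨hx, hy, hA⟩
    rw [mem_Rflush, ← hc] at h1 h2
    rw [mem_APts] at hA
    exact (plc_mem ν c h2.2).2 ((mem_forb ν c _ _).2 ⟨y1, hy, x1, h1.2, hx, hA.2⟩)
  refine ⟨?_, ?_, ?_⟩
  · rintro ⟨x, y⟩ h
    rw [mem_Rflush] at h
    rw [mem_APts]
    exact ⟨h.1, (plc_mem ν _ h.2).1⟩
  · rintro ⟨x1, y1⟩ h1 ⟨x2, y2⟩ h2 - (h | h)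
    · exact hcomp _ _ _ _ h1 h2 h
    · exact hcomp _ _ _ _ h2 h1 h
  · intro T' hA hP hsub
    refine Set.Subset.antisymm ?_ hsub
    have hcp : ∀ x1 y1 x2 y2, (x1, y1) ∈ T' → (x2, y2) ∈ T' →
      ¬ (x1 < x2 ∧ y1 < y2 ∧ (x2, y1) ∈ APts ν) := fun x1 y1 x2 y2 h1 h2 h =>
        hP h1 h2 (by intro e; simp only [Prod.mk.injEq] at e; omega) (Or.inl h)
    rintro ⟨x, y⟩ h
    have hxy := hA h
    rw [mem_APts] at hxy
    obtain ⟨hy, hx⟩ := hxy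
    rw [mem_Rflush, ← hc]
    refine ⟨hy, ?_⟩
    have hnf : x ∉ forb (rowAvail ν) c y := by
      intro hf
      obtain ⟨j, hj, l, hl, hlx, hxj⟩ := (mem_forb ν c _ _).1 hf
      refine hcp l j x y (hsub ?_) h ⟨hlx, hj, (mem_APts _ _ _).2 ⟨by omega, hxj⟩⟩
      rw [mem_Rflush]; exact ⟨by omega, hl⟩
    by_contra hn
    have hne : (plc (rowAvail ν) c y).toFinset.Nonempty := by
      rw [← Finset.card_pos, List.toFinset_card_of_nodup (plc_nodup ν c y), valid_length hv y hy]
      exact (hv.1 y hy).1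
    obtain ⟨l, hl, hmin⟩ := Finset.exists_min_image _ id hne
    simp only [List.mem_toFinset, id] at hl hmin
    have hxl : x < l := by
      rcases lt_trichotomy x l with h1 | h1 | h1
      · exact h1
      · exact absurd (h1 ▸ hl) hn
      · exact absurd (plc_up ν c hl h1 hx hnf) hn
    have hlA := (plc_mem ν c hl).1
    have hex : ∃ k, l ∈ forb (rowAvail ν) c k :=
      ⟨_, forb_top hv (by omega) ((mem_rowAvail ν l y).1 hlA).1⟩
    have hk := Nat.find_spec hex
    have hk2 : Nat.find hex ≤ northSteps ν + 1 :=
      Nat.find_min' hex (forb_top hv (by omega) ((mem_rowAvail ν l y).1 hlA).1)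
    have hmin2 := fun k => Nat.find_min hex (m := k)
    generalize Nat.find hex = k at *
    rcases k with _ | k
    · simp [forb] at hk
    rw [mem_forb_succ] at hk
    rcases hk with hk | ⟨hk, l', hl', hll⟩
    · exact hmin2 k (by omega) hk
    have hky : y < k := by
      rcases lt_trichotomy y k with h1 | h1 | h1
      · exact h1
      · subst h1; have := hmin l' hl'; omega
      · exact absurd (forb_mono ν c (show k + 1 ≤ y from h1)
          ((mem_forb_succ ν c _ _).2 (Or.inr ⟨hk, l', hl', hll⟩))) (plc_mem ν c hl).2
    refine hcp x y l k h (hsub ?_) ⟨hxl, hky, (mem_APts _ _ _).2 ⟨hy, hlA⟩⟩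
    rw [mem_Rflush]; exact ⟨by omega, hk⟩

lemma Rflush_rowCount {ν μ : List Bool} (hv : Valid ν (pointsAtHeight μ)) :
    ∀ y ≤ northSteps ν, rowCount (Rflush ν μ) y = pointsAtHeight μ y := by
  intro y hy
  unfold rowCount
  rw [← valid_length hv y hy, ← List.toFinset_card_of_nodup (plc_nodup _ _ y),
    ← Set.ncard_coe_finset]
  congr 1
  ext x
  simp [mem_Rflush, hy]

/-! ### Left flushing -/

lemma range_filter_ge (m e : ℕ) (F : List ℕ) (hF : ∀ x, x ∈ F ↔ x < e) (he : e ≤ m) :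
    (List.range m).filter (fun x => decide (x ∉ F)) = List.range' e (m - e) := by
  have h1 : List.range m = List.range e ++ List.range' e (m - e) := by
    obtain ⟨k, rfl⟩ := Nat.exists_eq_add_of_le he
    rw [List.range_add, List.range'_eq_map_range]
    congr 2; simp
  rw [h1, List.filter_append]
  have h2 : (List.range e).filter (fun x => decide (x ∉ F)) = [] := by
    rw [List.filter_eq_nil_iff]
    intro a ha
    simp only [List.mem_range] at ha
    simp [hF, ha]
  have h3 : (List.range' e (m - e)).filter (fun x => decide (x ∉ F)) = List.range' e (m - e) := by
    rw [List.filter_eq_self]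
    intro a ha
    rw [List.mem_range'_1] at ha
    simp [hF]; omega
  rw [h2, h3]; rfl

lemma lplc {m n : ℕ} {c : ℕ → ℕ} (h1 : ∀ y ≤ n, 1 ≤ c y) (hE : EE c (n + 1) = m) :
    ∀ y ≤ n, (∀ x, x ∈ forb (fun _ => List.range (m + 1)) c y ↔ x < EE c y) ∧
      plc (fun _ => List.range (m + 1)) c y = List.range' (EE c y) (c y) := by
  have step : ∀ y ≤ n, (∀ x, x ∈ forb (fun _ => List.range (m + 1)) c y ↔ x < EE c y) →
      plc (fun _ => List.range (m + 1)) c y = List.range' (EE c y) (c y) := by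
    intro y hy h
    have hle : EE c (y + 1) ≤ m := hE ▸ EE_mono c (by omega)
    have hc := h1 y hy
    rw [EE_succ] at hle
    unfold plc
    rw [range_filter_ge _ _ _ h (by omega)]
    obtain ⟨k, hk⟩ : ∃ k, m + 1 - EE c y = c y + k := ⟨m + 1 - EE c y - c y, by omega⟩
    rw [hk, ← List.range'_append_1, List.take_left']
    simp
  intro y
  induction y with
  | zero =>
    intro hy
    have : ∀ x, x ∈ forb (fun _ => List.range (m + 1)) c 0 ↔ x < EE c 0 := by
      intro x; simp [forb, EE]
    exact ⟨this, step 0 hy this⟩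
  | succ y ih =>
    intro hy
    obtain ⟨i1, i2⟩ := ih (by omega)
    have hc := h1 y (by omega)
    have : ∀ x, x ∈ forb (fun _ => List.range (m + 1)) c (y + 1) ↔ x < EE c (y + 1) := by
      intro x
      obtain ⟨k, hk⟩ := Nat.exists_eq_add_of_le' hc
      rw [forb_succ, List.mem_append, i1, i2, EE_succ, hk, ← List.range'_append_1]
      simp
      omega
    exact ⟨this, step _ hy this⟩

lemma mem_Lflush_valid {ν : List Bool} {T : Set (ℕ × ℕ)} (hv : Valid ν (rowCount T)) (x y : ℕ) :
    (x, y) ∈ Lflush ν T ↔ y ≤ northSteps ν ∧ EE (rowCount T) y ≤ x ∧ x ≤ EE (rowCount T) (y + 1) := by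
  rw [mem_Lflush]
  refine and_congr_right fun hy => ?_
  rw [(lplc (fun y hy => (hv.1 y hy).1) hv.2 y hy).2, List.mem_range'_1, EE_succ]
  have := (hv.1 y hy).1
  omega

/-! ### Paths -/

lemma pAH_nil (y : ℕ) : pointsAtHeight [] y = if y = 0 then 1 else 0 := by
  by_cases h : y = 0
  · simp [pointsAtHeight, h]
  · simp [pointsAtHeight, h, Ne.symm h]

lemma pAH_false (μ : List Bool) (y : ℕ) :
    pointsAtHeight (false :: μ) y = pointsAtHeight μ y + if y = 0 then 1 else 0 := by
  unfold pointsAtHeight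
  rw [List.length_cons, List.range_succ_eq_map, List.filter_cons, List.filter_map]
  by_cases h : y = 0
  · simp [h, Function.comp_def]
  · simp [h, Ne.symm h, Function.comp_def]

lemma pAH_true_zero (μ : List Bool) : pointsAtHeight (true :: μ) 0 = 1 := by
  unfold pointsAtHeight
  rw [List.length_cons, List.range_succ_eq_map, List.filter_cons, List.filter_map]
  simp [Function.comp_def]

lemma pAH_true_succ (μ : List Bool) (y : ℕ) :
    pointsAtHeight (true :: μ) (y + 1) = pointsAtHeight μ y := by
  unfold pointsAtHeight
  rw [List.length_cons, List.range_succ_eq_map, List.filter_cons, List.filter_map]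
  simp [Function.comp_def]

lemma pAH_pos (μ : List Bool) : ∀ y ≤ northSteps μ, 1 ≤ pointsAtHeight μ y := by
  induction μ with
  | nil => intro y hy; simp [northSteps] at hy; simp [pAH_nil, hy]
  | cons b μ ih =>
    intro y hy
    cases b
    · rw [pAH_false]; have := ih y (by simpa [northSteps] using hy); omega
    · rcases y with _ | y
      · rw [pAH_true_zero]
      · rw [pAH_true_succ]; exact ih y (by simpa [northSteps] using hy)

lemma EE_false (μ : List Bool) (y : ℕ) :
    EE (pointsAtHeight (false :: μ)) (y + 1) = EE (pointsAtHeight μ) (y + 1) + 1 := by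
  unfold EE
  rw [Finset.sum_range_succ', Finset.sum_range_succ' _ y]
  have := pAH_pos μ 0 (Nat.zero_le _)
  simp [pAH_false]
  omega

lemma EE_true (μ : List Bool) (y : ℕ) :
    EE (pointsAtHeight (true :: μ)) (y + 1) = EE (pointsAtHeight μ) y := by
  unfold EE
  rw [Finset.sum_range_succ']
  simp [pAH_true_zero, pAH_true_succ]

lemma EE_zero (c : ℕ → ℕ) : EE c 0 = 0 := rfl

lemma EE_path_top (μ : List Bool) : EE (pointsAtHeight μ) (northSteps μ + 1) = eastSteps μ := by
  induction μ with
  | nil => simp [EE, northSteps, eastSteps, pAH_nil]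
  | cons b μ ih =>
    cases b
    · rw [EE_false]; simp [northSteps, eastSteps] at *; omega
    · rw [EE_true]; simp [northSteps, eastSteps] at *; omega

lemma mem_path_cons (b : Bool) (μ : List Bool) (x y : ℕ) :
    (x, y) ∈ pathPointSet (b :: μ) ↔ (x = 0 ∧ y = 0) ∨
      ∃ x' y', (x', y') ∈ pathPointSet μ ∧ x = x' + (if b then 0 else 1) ∧
        y = y' + (if b then 1 else 0) := by
  constructor
  · rintro ⟨i, hi, h⟩
    rcases i with _ | i
    · simp [pointAt] at h; left; omega
    · right
      refine ⟨_, _, ⟨i, by simpa using hi, rfl⟩, ?_⟩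
      cases b <;> simp [pointAt] at h ⊢ <;> omega
  · rintro (⟨rfl, rfl⟩ | ⟨x', y', ⟨i, hi, h⟩, rfl, rfl⟩)
    · exact ⟨0, by simp, by simp [pointAt]⟩
    · refine ⟨i + 1, by simpa using hi, ?_⟩
      simp [pointAt] at h
      cases b <;> simp [pointAt, h]

lemma mem_path (μ : List Bool) : ∀ x y, (x, y) ∈ pathPointSet μ ↔
    y ≤ northSteps μ ∧ EE (pointsAtHeight μ) y ≤ x ∧ x ≤ EE (pointsAtHeight μ) (y + 1) := by
  induction μ with
  | nil =>
    intro x y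
    have : (x, y) ∈ pathPointSet [] ↔ x = 0 ∧ y = 0 := by
      constructor
      · rintro ⟨i, hi, h⟩; simp [pointAt] at h; omega
      · rintro ⟨rfl, rfl⟩; exact ⟨0, by simp, by simp [pointAt]⟩
    rw [this]
    constructor
    · rintro ⟨rfl, rfl⟩; simp [EE]
    · rintro ⟨h1, h2, h3⟩
      simp [northSteps] at h1
      subst h1
      simp [EE, pAH_nil] at h3
      exact ⟨h3, rfl⟩
  | cons b μ ih =>
    intro x y
    rw [mem_path_cons]
    simp only [ih]
    cases b
    · have hn : northSteps (false :: μ) = northSteps μ := by simp [northSteps]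
      rw [hn, EE_false]
      simp only [Bool.false_eq_true, if_false, Nat.add_zero]
      rcases y with _ | y
      · simp only [EE_zero]
        constructor
        · rintro (h | ⟨x', y', h, rfl, rfl⟩) <;> omega
        · intro h
          rcases x with _ | x
          · left; simp
          · right; exact ⟨x, 0, by rw [EE_zero]; omega, rfl, rfl⟩
      · rw [EE_false]
        constructor
        · rintro (h | ⟨x', y', h, rfl, rfl⟩) <;> omega
        · intro h
          rcases x with _ | x
          · omega
          · right; exact ⟨x, y + 1, by omega, rfl, rfl⟩
    · have hn : northSteps (true :: μ) = northSteps μ + 1 := by simp [northSteps]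
      rw [hn, EE_true]
      simp only [if_true, Nat.add_zero]
      rcases y with _ | y
      · simp only [EE_zero]
        constructor
        · rintro (h | ⟨x', y', h, rfl, h2⟩) <;> omega
        · intro h; exact Or.inl ⟨Nat.le_zero.1 h.2.2, trivial⟩
      · rw [EE_true]
        constructor
        · rintro (h | ⟨x', y', h, rfl, h2⟩)
          · omega
          · obtain rfl : y = y' := by omega
            omega
        · intro h
          right; exact ⟨x, y, by omega, rfl, rfl⟩

lemma path_valid {ν μ : List Bool} (h : IsNuPath ν μ) : Valid ν (pointsAtHeight μ) := by
  obtain ⟨h1, h2, h3⟩ := h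
  refine ⟨fun y hy => ⟨pAH_pos μ y (by omega), ?_⟩, ?_⟩
  · obtain ⟨i, hi, e⟩ := (mem_path μ (EE (pointsAtHeight μ) (y + 1)) y).2
      ⟨by omega, EE_mono _ (by omega), le_rfl⟩
    have := h3 i hi
    rw [e, mem_APts] at this
    exact this.2
  · rw [← h1, ← h2]; exact EE_path_top μ

def pathOf : (ℕ → ℕ) → ℕ → List Bool
  | c, 0 => List.replicate (c 0 - 1) false
  | c, n + 1 => List.replicate (c 0 - 1) false ++ true :: pathOf (fun j => c (j + 1)) n

lemma pAH_replicate (k : ℕ) (μ : List Bool) (y : ℕ) :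
    pointsAtHeight (List.replicate k false ++ μ) y = pointsAtHeight μ y + if y = 0 then k else 0 := by
  induction k with
  | zero => simp
  | succ k ih =>
    rw [List.replicate_succ, List.cons_append, pAH_false, ih]
    split_ifs <;> omega

lemma pathOf_north (c : ℕ → ℕ) (n : ℕ) : northSteps (pathOf c n) = n := by
  induction n generalizing c with
  | zero => simp [pathOf, northSteps, List.count_replicate]
  | succ n ih =>
    have := ih fun j => c (j + 1)
    simp [pathOf, northSteps, List.count_replicate] at *; omega

lemma pathOf_pAH (c : ℕ → ℕ) (n : ℕ) (hc : ∀ y ≤ n, 1 ≤ c y) :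
    ∀ y ≤ n, pointsAtHeight (pathOf c n) y = c y := by
  induction n generalizing c with
  | zero =>
    intro y hy
    obtain rfl : y = 0 := by omega
    have := pAH_replicate (c 0 - 1) [] 0
    rw [List.append_nil, pAH_nil] at this
    have h0 := hc 0 le_rfl
    simp only [pathOf]
    rw [this]; simp; omega
  | succ n ih =>
    intro y hy
    simp only [pathOf]
    rw [pAH_replicate]
    rcases y with _ | y
    · rw [pAH_true_zero]
      have h0 := hc 0 (by omega)
      simp; omega
    · rw [pAH_true_succ, ih _ (fun j hj => hc _ (by omega)) y (by omega)]
      simp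

lemma exists_path {ν : List Bool} {c : ℕ → ℕ} (hv : Valid ν c) :
    ∃ μ, IsNuPath ν μ ∧ ∀ y ≤ northSteps ν, pointsAtHeight μ y = c y := by
  have hc := pathOf_pAH c (northSteps ν) (fun y hy => (hv.1 y hy).1)
  have hn := pathOf_north c (northSteps ν)
  refine ⟨pathOf c (northSteps ν), ⟨?_, hn, ?_⟩, hc⟩
  · rw [← EE_path_top, hn, ← hv.2]
    exact EE_congr fun j hj => hc j (by omega)
  · intro i hi
    have hm : pointAt (pathOf c (northSteps ν)) i ∈ pathPointSet (pathOf c (northSteps ν)) :=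
      ⟨i, hi, rfl⟩
    generalize pointAt (pathOf c (northSteps ν)) i = p at *
    obtain ⟨x, y⟩ := p
    rw [mem_path, hn] at hm
    rw [mem_APts]
    refine ⟨hm.1, rowAvail_lower ν hm.2.2 ?_⟩
    rw [EE_congr (c' := c) fun j hj => hc j (by omega)]
    exact (hv.1 y hm.1).2

/-! ### Trees -/

section tree
variable {ν : List Bool} {T : Set (ℕ × ℕ)}

lemma tree_comp (hT : IsNuTree ν T) {x1 y1 x2 y2 : ℕ} (h1 : (x1, y1) ∈ T) (h2 : (x2, y2) ∈ T)
    (hx : x1 < x2) (hy : y1 < y2) : x2 ∉ rowAvail ν y1 := by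
  intro h
  have hA := (mem_APts ν x1 y1).1 (hT.1 h1)
  exact hT.2.1 h1 h2 (by intro e; simp only [Prod.mk.injEq] at e; omega)
    (Or.inl ⟨hx, hy, (mem_APts _ _ _).2 ⟨hA.1, h⟩⟩)

lemma tree_max (hT : IsNuTree ν T) {x y : ℕ} (hy : y ≤ northSteps ν) (hx : x ∈ rowAvail ν y)
    (hb : ∀ x' y', (x', y') ∈ T → y' < y → x' < x → x ∉ rowAvail ν y')
    (ha : ∀ x' y', (x', y') ∈ T → y < y' → x < x' → x' ∉ rowAvail ν y) : (x, y) ∈ T := by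
  have key : ∀ q ∈ T, ¬ Incompatible ν (x, y) q := by
    rintro ⟨x', y'⟩ hq (⟨h1, h2, h3⟩ | ⟨h1, h2, h3⟩)
    · exact ha x' y' hq h2 h1 ((mem_APts _ _ _).1 h3).2
    · exact hb x' y' hq h2 h1 ((mem_APts _ _ _).1 h3).2
  have := hT.2.2 (insert (x, y) T) ?_ ?_ (Set.subset_insert _ _)
  · rw [← this]; exact Set.mem_insert _ _
  · intro q hq
    rcases hq with rfl | hq
    · exact (mem_APts _ _ _).2 ⟨hy, hx⟩
    · exact hT.1 hq
  · apply hT.2.1.insert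
    intro q hq _
    exact ⟨key q hq, fun h => key q hq (Or.symm h)⟩

lemma tree_top (hT : IsNuTree ν T) : (0, northSteps ν) ∈ T := by
  apply tree_max hT le_rfl (zero_mem_rowAvail _ _)
  · intro x' y' _ _ h; omega
  · intro x' y' h h2
    have := (mem_APts ν x' y').1 (hT.1 h)
    omega

lemma tree_row_nonempty (hT : IsNuTree ν T) {y : ℕ} (hy : y ≤ northSteps ν) : ∃ x, (x, y) ∈ T := by
  set S := (rowAvail ν y).toFinset.filter (fun x => ∃ y' ≥ y, (x, y') ∈ T) with hS
  have hne : S.Nonempty := ⟨0, by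
    rw [hS, Finset.mem_filter, List.mem_toFinset]
    exact ⟨zero_mem_rowAvail _ _, _, hy, tree_top hT⟩⟩
  obtain ⟨x, hx, hmax⟩ := Finset.exists_max_image S id hne
  rw [hS, Finset.mem_filter, List.mem_toFinset] at hx
  obtain ⟨hxA, y', hy', hxT⟩ := hx
  refine ⟨x, tree_max hT hy hxA ?_ ?_⟩
  · intro x1 y1 h1 hy1 hx1
    exact tree_comp hT h1 hxT hx1 (by omega)
  · intro x1 y1 h1 hy1 hx1 hA
    have := hmax x1 (by
      rw [hS, Finset.mem_filter, List.mem_toFinset]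
      exact ⟨hA, y1, by omega, h1⟩)
    simp only [id] at this
    omega

lemma tree_up (hT : IsNuTree ν T) {l x y : ℕ} (hl : (l, y) ∈ T) (hlx : l < x)
    (hx : x ∈ rowAvail ν y)
    (hb : ∀ x' y', (x', y') ∈ T → y' < y → x' < x → x ∉ rowAvail ν y') : (x, y) ∈ T := by
  have hA := (mem_APts ν l y).1 (hT.1 hl)
  refine tree_max hT hA.1 hx hb ?_
  intro x' y' h hy hxx
  exact tree_comp hT hl h (by omega) hy

noncomputable def trow (ν : List Bool) (T : Set (ℕ × ℕ)) (y : ℕ) : Finset ℕ :=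
  (rowAvail ν y).toFinset.filter (fun x => (x, y) ∈ T)

lemma mem_trow (hT : IsNuTree ν T) (x y : ℕ) : x ∈ trow ν T y ↔ (x, y) ∈ T := by
  rw [trow, Finset.mem_filter, List.mem_toFinset]
  exact ⟨fun h => h.2, fun h => ⟨((mem_APts ν x y).1 (hT.1 h)).2, h⟩⟩

lemma card_trow (hT : IsNuTree ν T) (y : ℕ) : (trow ν T y).card = rowCount T y := by
  unfold rowCount
  rw [← Set.ncard_coe_finset]
  congr 1
  ext x
  simpa using mem_trow hT x y

lemma tree_plc (hT : IsNuTree ν T) (c : ℕ → ℕ) (hc : ∀ y ≤ northSteps ν, c y = rowCount T y) :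
    ∀ y ≤ northSteps ν, (∀ x, x ∈ plc (rowAvail ν) c y ↔ (x, y) ∈ T) ∧
      (plc (rowAvail ν) c y).length = c y := by
  intro y
  induction y using Nat.strong_induction_on with
  | _ y ih =>
    intro hy
    have hf : ∀ x, x ∈ forb (rowAvail ν) c y ↔
        ∃ j < y, ∃ l, (l, j) ∈ T ∧ l < x ∧ x ∈ rowAvail ν j := by
      intro x
      rw [mem_forb]
      refine exists_congr fun j => and_congr_right fun hj => exists_congr fun l => ?_
      rw [(ih j hj (by omega)).1]
    have key := fun x => take_eq_of_up (filt_sorted ν c y) (trow ν T y) ?_ ?_ x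
    · rw [card_trow hT, ← hc y hy] at key
      exact ⟨fun x => (key x).1.trans (mem_trow hT x y), (key 0).2⟩
    · intro x hx
      rw [mem_trow hT] at hx
      rw [List.mem_filter]
      refine ⟨((mem_APts ν x y).1 (hT.1 hx)).2, ?_⟩
      rw [decide_eq_true_iff, hf]
      rintro ⟨j, hj, l, hl, hlx, hA⟩
      exact tree_comp hT hl hx hlx hj hA
    · intro x hx x' hx' hlt
      rw [mem_trow hT] at *
      rw [List.mem_filter, decide_eq_true_iff, hf] at hx'
      refine tree_up hT hx hlt hx'.1 fun a b h1 h2 h3 h4 => hx'.2 ⟨b, h2, a, h1, h3, h4⟩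

lemma tree_valid (hT : IsNuTree ν T) : Valid ν (rowCount T) := by
  have hp := tree_plc hT (rowCount T) (fun _ _ => rfl)
  have hlen : ∀ y ≤ northSteps ν, (forb (rowAvail ν) (rowCount T) (y + 1)).toFinset.card =
      EE (rowCount T) (y + 1) := fun y hy => by
    rw [List.toFinset_card_of_nodup (forb_nodup _ _ _)]
    exact forb_length ν _ _ fun j hj => (hp j (by omega)).2
  refine ⟨fun y hy => ⟨?_, ?_⟩, ?_⟩
  · obtain ⟨x, hx⟩ := tree_row_nonempty hT hy
    rw [← card_trow hT]
    exact Finset.card_pos.2 ⟨x, (mem_trow hT _ _).2 hx⟩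
  · apply mem_rowAvail_of_lt
    rw [← hlen y hy, ← List.toFinset_card_of_nodup (rowAvail_nodup ν y)]
    apply Finset.card_lt_card
    rw [Finset.ssubset_iff_of_subset]
    · refine ⟨0, by simpa using zero_mem_rowAvail ν y, ?_⟩
      rw [List.mem_toFinset]
      intro h
      have := (forb_avail ν _ h).2
      omega
    · intro x hx
      rw [List.mem_toFinset] at *
      exact (forb_avail ν _ hx).1
  · rw [← hlen _ le_rfl]
    have : (forb (rowAvail ν) (rowCount T) (northSteps ν + 1)).toFinset =
        Finset.Icc 1 (eastSteps ν) := by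
      ext x
      rw [List.mem_toFinset, Finset.mem_Icc]
      constructor
      · intro h
        have := forb_avail ν _ h
        rw [rowAvail_top] at this
        omega
      · intro h
        rw [mem_forb]
        exact ⟨northSteps ν, by omega, 0, ((hp _ le_rfl).1 0).2 (tree_top hT), by omega,
          (rowAvail_top ν x).2 h.2⟩
    rw [this]; simp

end tree

lemma Lflush_eq {ν μ : List Bool} {T : Set (ℕ × ℕ)} (hμ : IsNuPath ν μ)
    (h : ∀ y ≤ northSteps ν, rowCount T y = pointsAtHeight μ y) (hv : Valid ν (rowCount T)) :
    Lflush ν T = pathPointSet μ := by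
  ext ⟨x, y⟩
  rw [mem_Lflush_valid hv, mem_path, hμ.2.1]
  refine and_congr_right fun hy => ?_
  rw [EE_congr (y := y) fun j hj => h j (by omega),
    EE_congr (y := y + 1) fun j hj => h j (by omega)]

lemma counts_eq {ν μ : List Bool} {T : Set (ℕ × ℕ)} (hμ : IsNuPath ν μ)
    (hv : Valid ν (rowCount T)) (h : Lflush ν T = pathPointSet μ) :
    ∀ y ≤ northSteps ν, pointsAtHeight μ y = rowCount T y := by
  intro y hy
  have hv' := path_valid hμ
  have e : ∀ x, (EE (rowCount T) y ≤ x ∧ x ≤ EE (rowCount T) (y + 1)) ↔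
      (EE (pointsAtHeight μ) y ≤ x ∧ x ≤ EE (pointsAtHeight μ) (y + 1)) := by
    intro x
    have h1 := mem_Lflush_valid hv x y
    rw [h, mem_path, hμ.2.1] at h1
    simpa [hy] using h1.symm
  have a1 := (e (EE (rowCount T) y)).1 ⟨le_rfl, EE_mono _ (by omega)⟩
  have a2 := (e (EE (pointsAtHeight μ) y)).2 ⟨le_rfl, EE_mono _ (by omega)⟩
  have a3 := (e (EE (rowCount T) (y + 1))).1 ⟨EE_mono _ (by omega), le_rfl⟩
  have a4 := (e (EE (pointsAtHeight μ) (y + 1))).2 ⟨EE_mono _ (by omega), le_rfl⟩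
  have s1 := EE_succ (rowCount T) y
  have s2 := EE_succ (pointsAtHeight μ) y
  have p1 := (hv.1 y hy).1
  have p2 := (hv'.1 y hy).1
  omega

theorem flushing_bijections (ν : List Bool) :
    (∀ μ, IsNuPath ν μ →
      (∀ y ≤ northSteps ν, rowCount (Rflush ν μ) y = pointsAtHeight μ y) ∧
      IsNuTree ν (Rflush ν μ)) ∧
    (∀ T, IsNuTree ν T → ∃ μ, IsNuPath ν μ ∧ Lflush ν T = pathPointSet μ) ∧
    (∀ μ, IsNuPath ν μ → Lflush ν (Rflush ν μ) = pathPointSet μ) ∧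
    (∀ T, IsNuTree ν T → ∀ μ, IsNuPath ν μ → Lflush ν T = pathPointSet μ →
      Rflush ν μ = T) := by

  refine ⟨fun μ hμ => ⟨Rflush_rowCount (path_valid hμ), Rflush_tree (path_valid hμ)⟩, ?_, ?_, ?_⟩
  · intro T hT
    obtain ⟨μ, hμ, h⟩ := exists_path (tree_valid hT)
    exact ⟨μ, hμ, Lflush_eq hμ (fun y hy => (h y hy).symm) (tree_valid hT)⟩
  · intro μ hμ
    exact Lflush_eq hμ (Rflush_rowCount (path_valid hμ)) (tree_valid (Rflush_tree (path_valid hμ)))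
  · intro T hT μ hμ h
    have hc := counts_eq hμ (tree_valid hT) h
    ext ⟨x, y⟩
    rw [mem_Rflush]
    constructor
    · rintro ⟨hy, hx⟩
      exact ((tree_plc hT _ hc y hy).1 x).1 hx
    · intro hx
      have hy := ((mem_APts ν x y).1 (hT.1 hx)).1
      exact ⟨hy, ((tree_plc hT _ hc y hy).1 x).2 hx⟩
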